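/- arXiv:1903.09357 — 2 statements merged into one kernel-verified Lean document; each statement's English description precedes it below -/
import Mathlib

section
/- Assume the faithfulness condition (F). Then every point of the shell Z_A lies in the T^ℓ-orbit of a point of φ(Z_B): for every u ∈ Z_A there exist t ∈ T^ℓ and z ∈ Z_B with t·u = φ(z). Consequently, the map [z] ↦ [φ(z)] is a well-defined homeomorphism from the orbit space Z_B/T^1 (with the quotient topology) onto the orbit space Z_A/T^ℓ (with the quotient topology). -/
open Complex

/-- Points of `ℂ^{ℓ+k}`. -/
abbrev PtA (ℓ k : ℕ) := (Fin ℓ → ℂ) × (Fin k → ℂ)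

/-- Points of `ℂ^{k+1}`. -/
abbrev PtB (k : ℕ) := ℂ × (Fin k → ℂ)

/-- The `T^ℓ`-action on `ℂ^{ℓ+k}`: `(t·u)_i = t_i^{-a_i} u_i` for `i ≤ ℓ` and
`(t·u)_{ℓ+r} = (∏_i t_i^{c_r n_i}) u_{ℓ+r}` for `r ≤ k`. -/
noncomputable def actA (ℓ k : ℕ) (a n : Fin ℓ → ℕ) (c : Fin k → ℕ)
    (t : Fin ℓ → ℂ) (u : PtA ℓ k) : PtA ℓ k :=
  (fun i => t i ^ (-(a i : ℤ)) * u.1 i,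
   fun r => (∏ i, t i ^ (c r * n i)) * u.2 r)

/-- The `T¹`-action on `ℂ^{k+1}`: `(t·z)_1 = t^{-α} z_1`, `(t·z)_{1+r} = t^{c_r β} z_{1+r}`. -/
noncomputable def actB (k : ℕ) (α β : ℕ) (c : Fin k → ℕ) (t : ℂ) (z : PtB k) : PtB k :=
  (t ^ (-(α : ℤ)) * z.1, fun r => t ^ (c r * β) * z.2 r)

/-- The shell `Z_A ⊆ ℂ^{ℓ+k}`. -/
def shellA (ℓ k : ℕ) (a n : Fin ℓ → ℕ) (c : Fin k → ℕ) : Set (PtA ℓ k) :=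
  {u | ∀ i, -(a i : ℝ) * normSq (u.1 i)
      + (n i : ℝ) * ∑ r, (c r : ℝ) * normSq (u.2 r) = 0}

/-- The shell `Z_B ⊆ ℂ^{k+1}`. -/
def shellB (k : ℕ) (α β : ℕ) (c : Fin k → ℕ) : Set (PtB k) :=
  {z | -(α : ℝ) * normSq z.1 + (β : ℝ) * ∑ r, (c r : ℝ) * normSq (z.2 r) = 0}

/-- The embedding `φ : ℂ^{k+1} → ℂ^{ℓ+k}`. -/
noncomputable def phiMap (ℓ k : ℕ) (m : Fin ℓ → ℕ) (β : ℕ) (z : PtB k) : PtA ℓ k :=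
  (fun i => (Real.sqrt ((m i : ℝ) / (β : ℝ)) : ℂ) * z.1, z.2)

/-- The orbit relation on the shell `Z_A` induced by the `T^ℓ`-action. -/
noncomputable def relA (ℓ k : ℕ) (a n : Fin ℓ → ℕ) (c : Fin k → ℕ)
    (x y : shellA ℓ k a n c) : Prop :=
  ∃ t : Fin ℓ → ℂ, (∀ i, ‖t i‖ = 1) ∧ actA ℓ k a n c t x.1 = y.1

/-- The orbit relation on the shell `Z_B` induced by the `T¹`-action. -/
noncomputable def relB (k : ℕ) (α β : ℕ) (c : Fin k → ℕ)
    (x y : shellB k α β c) : Prop :=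
  ∃ t : ℂ, ‖t‖ = 1 ∧ actB k α β c t x.1 = y.1

/-!
On the shell `Z_A` the norms `‖u_i‖` are proportional to `√m_i`, so a torus element that makes every
`u_i` real and nonnegative carries `u` into `φ(Z_B)`.

Put `b_i = α / a_i`. The `a_i` being pairwise coprime, `b_i` is the product of the other `a_j`, and
`s ↦ (s ^ b_i)_i` is a homomorphism `T¹ → T^ℓ` along which `φ` is equivariant. Conversely, let `t`
carry `φ(z)` to `φ(w)`. If `z_1 ≠ 0`, then all `t_i ^ a_i` agree, and a Bézout identity
`∑ e_i b_i = 1` yields `s = ∏ t_i ^ e_i` with `s ^ b_i = t_i` for all `i`. If `z_1 = 0`, then `t`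
acts only through `∏ t_i ^ n_i`, of which any `β`-th root serves as `s`. Thus `φ` induces a
bijection of orbit spaces; it is a homeomorphism because `φ` is a closed embedding and the orbit map
of the compact group `T^ℓ` is closed.
-/

section Quotients

variable {X Y : Type*} [TopologicalSpace X] [TopologicalSpace Y]
  {r : X → X → Prop} {s : Y → Y → Prop} {f : X → Y}

theorem exists_homeomorph_quot (hs : Equivalence s) (hs_closed : IsClosedMap (Quot.mk s))
    (hf : Continuous f) (hf_closed : IsClosedMap f) (hrs : ∀ x x', r x x' ↔ s (f x) (f x'))
    (hf_surj : ∀ y, ∃ x, s y (f x)) :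
    ∃ F : Quot r ≃ₜ Quot s, ∀ x, F (Quot.mk r x) = Quot.mk s (f x) := by
  let g : Quot r → Quot s := Quot.map f fun x x' ↦ (hrs x x').1
  have hcomp_surj : Function.Surjective (g ∘ Quot.mk r) := by
    rintro ⟨y⟩
    obtain ⟨x, hx⟩ := hf_surj y
    exact ⟨x, (Quot.sound hx).symm⟩
  have hcomp : Topology.IsQuotientMap (g ∘ Quot.mk r) :=
    (hs_closed.comp hf_closed).isQuotientMap (continuous_quot_mk.comp hf) hcomp_surj
  have hg_inj : Function.Injective g := by
    rintro ⟨x⟩ ⟨x'⟩ h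
    exact Quot.sound ((hrs x x').2 ((hs.quot_mk_eq_iff _ _).1 h))
  have hg : Topology.IsQuotientMap g := isQuotientMap_quot_mk.of_comp_isQuotientMap hcomp
  exact ⟨(isHomeomorph_iff_isQuotientMap_injective.2 ⟨hg, hg_inj⟩).homeomorph g, fun _ ↦ rfl⟩

end Quotients

section SimultaneousRoots

variable {ι : Type*} [Fintype ι]

theorem prod_zpow_eq_zpow_sum {G : Type*} [CommGroup G] (g : G) (f : ι → ℤ) :
    ∏ i, g ^ f i = g ^ ∑ i, f i :=
  (map_prod (zpowersHom G g) (fun i ↦ .ofAdd (f i)) Finset.univ).symm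

theorem exists_forall_pow_eq_of_sum_mul_eq_one {G : Type*} [CommGroup G] {b : ι → ℕ} {e : ι → ℤ}
    {t : ι → G} (he : ∑ i, e i * b i = 1) (ht : ∀ i j, t i ^ b j = t j ^ b i) :
    ∃ s : G, ∀ j, s ^ b j = t j := by
  refine ⟨∏ i, t i ^ e i, fun j ↦ ?_⟩
  calc (∏ i, t i ^ e i) ^ b j = ∏ i, (t i ^ b j) ^ e i := by
        simp only [← zpow_natCast, ← Finset.prod_zpow, zpow_comm _ (e _)]
    _ = ∏ i, t j ^ (e i * b i) := by
        simp only [ht _ j, mul_comm (e _), zpow_mul, zpow_natCast]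
    _ = t j := by rw [prod_zpow_eq_zpow_sum, he, zpow_one]

variable [DecidableEq ι] {a : ι → ℕ}

theorem pow_prod_compl_comm {M : Type*} [Monoid M] {t : ι → M} {v : M}
    (ht : ∀ i, t i ^ a i = v) (i j : ι) :
    t i ^ ∏ x ∈ {j}ᶜ, a x = t j ^ ∏ x ∈ {i}ᶜ, a x := by
  obtain rfl | hij := eq_or_ne i j
  · rfl
  have hprod {i j : ι} (hij : i ≠ j) :
      ∏ x ∈ {j}ᶜ, a x = a i * ∏ x ∈ ({i, j} : Finset ι)ᶜ, a x := by
    rw [Finset.compl_insert, Finset.mul_prod_erase _ _ (by simpa using hij)]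
  rw [hprod hij, hprod hij.symm, pow_mul, pow_mul, ht, ht, Finset.pair_comm]

theorem exists_forall_pow_prod_compl_eq {G : Type*} [CommGroup G] {t : ι → G} {v : G}
    (ha : Pairwise (Function.onFun Nat.Coprime a)) (ht : ∀ i, t i ^ a i = v) :
    ∃ s : G, ∀ i, s ^ ∏ j ∈ {i}ᶜ, a j = t i := by
  cases isEmpty_or_nonempty ι
  · exact ⟨1, isEmptyElim⟩
  obtain ⟨e, he⟩ := (exists_sum_eq_one_iff_pairwise_coprime' (s := fun i ↦ (a i : ℤ))).2
    (ha.mono fun _ _ ↦ Nat.isCoprime_iff_coprime.2)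
  exact exists_forall_pow_eq_of_sum_mul_eq_one (by exact_mod_cast he) (pow_prod_compl_comm ht)

theorem mul_prod_compl_eq_lcm (ha : Pairwise (Function.onFun Nat.Coprime a)) (i : ι) :
    a i * ∏ j ∈ {i}ᶜ, a j = Finset.univ.lcm a := by
  rw [← Fintype.prod_eq_mul_prod_compl, Finset.lcm_eq_prod (ha.set_pairwise _)]

end SimultaneousRoots

section CircleLemmas

theorem exists_circle_pow_eq {d : ℕ} (hd : d ≠ 0) (v : Circle) : ∃ s : Circle, s ^ d = v := by
  refine ⟨Circle.exp (arg v / d), ?_⟩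
  rw [← Circle.exp_natCast_mul, mul_div_cancel₀ _ (Nat.cast_ne_zero.2 hd), Circle.exp_arg]

theorem exists_circle_zpow_neg_mul_eq_norm {d : ℕ} (hd : d ≠ 0) (u : ℂ) :
    ∃ t : Circle, (t : ℂ) ^ (-(d : ℤ)) * u = ‖u‖ := by
  obtain ⟨t, ht⟩ := exists_circle_pow_eq hd (Circle.exp (arg u))
  refine ⟨t, ?_⟩
  rw [zpow_neg, zpow_natCast, ← Circle.coe_pow, ht, inv_mul_eq_iff_eq_mul₀ (Circle.coe_ne_zero _),
    Circle.coe_exp, mul_comm, norm_mul_exp_arg_mul_I]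

theorem exists_norm_eq_one_and_iff {P : ℂ → Prop} :
    (∃ t : ℂ, ‖t‖ = 1 ∧ P t) ↔ ∃ t : Circle, P t :=
  ⟨fun ⟨t, ht, h⟩ ↦ ⟨⟨t, mem_sphere_zero_iff_norm.2 ht⟩, h⟩, fun ⟨t, h⟩ ↦ ⟨t, t.norm_coe, h⟩⟩

theorem exists_forall_norm_eq_one_and_iff {ι : Type*} {P : (ι → ℂ) → Prop} :
    (∃ t : ι → ℂ, (∀ i, ‖t i‖ = 1) ∧ P t) ↔ ∃ t : ι → Circle, P fun i ↦ t i :=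
  ⟨fun ⟨t, ht, h⟩ ↦ ⟨fun i ↦ ⟨t i, mem_sphere_zero_iff_norm.2 (ht i)⟩, h⟩,
    fun ⟨t, h⟩ ↦ ⟨fun i ↦ t i, fun i ↦ (t i).norm_coe, h⟩⟩

end CircleLemmas

variable {ℓ k : ℕ} {a n b m : Fin ℓ → ℕ} {c : Fin k → ℕ} {α β : ℕ}

section TorusAction

theorem actA_one (u : PtA ℓ k) : actA ℓ k a n c (fun _ ↦ 1) u = u := by
  simp [actA]

theorem actA_mul (s t : Fin ℓ → ℂ) (u : PtA ℓ k) :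
    actA ℓ k a n c (fun i ↦ s i * t i) u = actA ℓ k a n c s (actA ℓ k a n c t u) := by
  simp only [actA, mul_zpow, mul_pow, Finset.prod_mul_distrib, mul_assoc]

theorem actA_mem_shellA (t : Fin ℓ → Circle) {u : PtA ℓ k} (hu : u ∈ shellA ℓ k a n c) :
    actA ℓ k a n c (fun i ↦ t i) u ∈ shellA ℓ k a n c := by
  intro i
  simpa [actA, normSq_eq_norm_sq, norm_prod, Circle.norm_coe] using hu i

theorem continuous_actA :
    Continuous fun p : (Fin ℓ → Circle) × PtA ℓ k ↦ actA ℓ k a n c (fun i ↦ p.1 i) p.2 := by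
  refine Continuous.prodMk (continuous_pi fun i ↦ .mul ?_ (by fun_prop)) (by fun_prop)
  exact .zpow₀ (by fun_prop) _ fun p ↦ .inl (p.1 i).coe_ne_zero

/-- The action of the torus on its shell, with `T^ℓ` encoded as `Fin ℓ → Circle`. -/
noncomputable instance shellA.instMulAction :
    MulAction (Fin ℓ → Circle) (shellA ℓ k a n c) where
  smul t u := ⟨actA ℓ k a n c (fun i ↦ t i) u, actA_mem_shellA t u.2⟩
  one_smul u := Subtype.ext (actA_one u.1)
  mul_smul s t u := Subtype.ext (actA_mul (fun i ↦ s i) (fun i ↦ t i) u.1)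

instance shellA.instContinuousSMul :
    ContinuousSMul (Fin ℓ → Circle) (shellA ℓ k a n c) where
  continuous_smul :=
    (continuous_actA.comp (continuous_id.prodMap continuous_subtype_val)).subtype_mk _

theorem relA_iff {u v : shellA ℓ k a n c} :
    relA ℓ k a n c u v ↔ ∃ t : Fin ℓ → Circle, actA ℓ k a n c (fun i ↦ t i) u = v :=
  exists_forall_norm_eq_one_and_iff

theorem relB_iff {z w : shellB k α β c} :
    relB k α β c z w ↔ ∃ s : Circle, actB k α β c s z = w :=
  exists_norm_eq_one_and_iff

theorem relA_eq_orbitRel :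
    relA ℓ k a n c = MulAction.orbitRel (Fin ℓ → Circle) (shellA ℓ k a n c) := by
  ext u v
  rw [Setoid.comm', relA_iff]
  exact exists_congr fun t ↦ (Subtype.ext_iff (a1 := t • u) (a2 := v)).symm

theorem equivalence_relA : Equivalence (relA ℓ k a n c) := by
  rw [relA_eq_orbitRel]
  exact (MulAction.orbitRel _ _).iseqv

theorem isClosedMap_quot_mk_relA : IsClosedMap (Quot.mk (relA ℓ k a n c)) := by
  rw [relA_eq_orbitRel]
  exact MulAction.isClosedMap_quotient

end TorusAction

section Embedding

theorem ofReal_sqrt_div_ne_zero {x y : ℝ} (hx : 0 < x) (hy : 0 < y) : (√(x / y) : ℂ) ≠ 0 :=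
  ofReal_ne_zero.2 (Real.sqrt_pos.2 (div_pos hx hy)).ne'

theorem isClosed_shellB : IsClosed (shellB k α β c) := by
  have := continuous_normSq
  exact isClosed_eq (by fun_prop) continuous_const

theorem isClosedEmbedding_phiMap (hβ : 0 < β) {i : Fin ℓ} (hm : 0 < m i) :
    Topology.IsClosedEmbedding (phiMap ℓ k m β) := by
  have hsqrt : (√((m i : ℝ) / β) : ℂ) ≠ 0 :=
    ofReal_sqrt_div_ne_zero (Nat.cast_pos.2 hm) (Nat.cast_pos.2 hβ)
  refine Function.LeftInverse.isClosedEmbedding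
    (f := fun u : PtA ℓ k ↦ (u.1 i / (√((m i : ℝ) / β) : ℂ), u.2)) (fun z ↦ ?_) (by fun_prop)
    (by unfold phiMap; fun_prop)
  exact Prod.ext (mul_div_cancel_left₀ _ hsqrt) rfl

theorem isClosedMap_restrict_phiMap (hβ : 0 < β) {i : Fin ℓ} (hm : 0 < m i)
    (hφ : Set.MapsTo (phiMap ℓ k m β) (shellB k α β c) (shellA ℓ k a n c)) :
    IsClosedMap hφ.restrict := by
  have hcomp := (isClosedEmbedding_phiMap hβ hm).comp
    (isClosed_shellB (α := α) (β := β) (c := c)).isClosedEmbedding_subtypeVal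
  exact (Topology.IsClosedEmbedding.of_comp (f := hφ.restrict) .subtypeVal hcomp).isClosedMap

theorem phiMap_mem_shellA_iff [NeZero ℓ] (hn : ∀ i, 0 < n i) (hβ : 0 < β)
    (ham : ∀ i, a i * m i = n i * α) {z : PtB k} :
    phiMap ℓ k m β z ∈ shellA ℓ k a n c ↔ z ∈ shellB k α β c := by
  have hβ' : (β : ℝ) ≠ 0 := by positivity
  have hform (i : Fin ℓ) : -(a i : ℝ) * normSq ((phiMap ℓ k m β z).1 i)
        + n i * ∑ r, (c r : ℝ) * normSq ((phiMap ℓ k m β z).2 r)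
      = n i / β * (-(α : ℝ) * normSq z.1 + β * ∑ r, (c r : ℝ) * normSq (z.2 r)) := by
    have ham' : (a i : ℝ) * m i = n i * α := mod_cast ham i
    simp only [phiMap, normSq_mul, normSq_ofReal]
    rw [Real.mul_self_sqrt (by positivity)]
    field_simp
    linear_combination (-normSq z.1) * ham'
  have hscale (i : Fin ℓ) : (n i / β : ℝ) ≠ 0 := div_ne_zero (by exact_mod_cast (hn i).ne') hβ'
  simp only [shellA, shellB, Set.mem_ofPred_eq, hform, mul_eq_zero_iff_left (hscale _),
    forall_const]

theorem exists_phiMap_eq (ha : ∀ i, 0 < a i) (hα : 0 < α) (hβ : 0 < β)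
    (ham : ∀ i, a i * m i = n i * α) {u : PtA ℓ k} (hu : u ∈ shellA ℓ k a n c)
    (hreal : ∀ i, u.1 i = ‖u.1 i‖) : ∃ z, phiMap ℓ k m β z = u := by
  set S : ℝ := ∑ r, (c r : ℝ) * normSq (u.2 r)
  have : 0 ≤ S := Finset.sum_nonneg fun r _ ↦ mul_nonneg (by positivity) (normSq_nonneg _)
  have hnorm_sq (i : Fin ℓ) : ‖u.1 i‖ ^ 2 = m i / β * (β * S / α) := by
    have hui : -(a i : ℝ) * normSq (u.1 i) + n i * S = 0 := hu i
    have ham' : (a i : ℝ) * m i = n i * α := mod_cast ham i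
    have hai : (a i : ℝ) ≠ 0 := by exact_mod_cast (ha i).ne'
    rw [normSq_eq_norm_sq] at hui
    field_simp
    apply mul_left_cancel₀ hai
    linear_combination (-(α : ℝ)) * hui - S * ham'
  refine ⟨(√(β * S / α), u.2), Prod.ext (funext fun i ↦ ?_) rfl⟩
  rw [hreal i]
  simp only [phiMap]
  rw [← ofReal_mul, ← Real.sqrt_mul (by positivity), ← hnorm_sq, Real.sqrt_sq (norm_nonneg _)]

theorem exists_actA_eq_phiMap [NeZero ℓ] (ha : ∀ i, 0 < a i) (hn : ∀ i, 0 < n i) (hα : 0 < α)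
    (hβ : 0 < β) (ham : ∀ i, a i * m i = n i * α) {u : PtA ℓ k} (hu : u ∈ shellA ℓ k a n c) :
    ∃ t : Fin ℓ → Circle, ∃ z ∈ shellB k α β c,
      actA ℓ k a n c (fun i ↦ t i) u = phiMap ℓ k m β z := by
  choose t ht using fun i ↦ exists_circle_zpow_neg_mul_eq_norm (ha i).ne' (u.1 i)
  have htu := actA_mem_shellA t hu
  have hreal (i : Fin ℓ) : (actA ℓ k a n c (fun i ↦ t i) u).1 i
      = ‖(actA ℓ k a n c (fun i ↦ t i) u).1 i‖ := by simp only [actA, ht, norm_real, norm_norm]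
  obtain ⟨z, hz⟩ := exists_phiMap_eq ha hα hβ ham htu hreal
  exact ⟨t, z, (phiMap_mem_shellA_iff hn hβ ham).1 (hz ▸ htu), hz.symm⟩

end Embedding

section OrbitSpaces

theorem actA_pow_phiMap (hab : ∀ i, a i * b i = α) (hnb : ∀ i, n i * b i = m i)
    (hβ : ∑ i, m i = β) (s : ℂ) (z : PtB k) :
    actA ℓ k a n c (fun i ↦ s ^ b i) (phiMap ℓ k m β z) = phiMap ℓ k m β (actB k α β c s z) := by
  have hfst (i : Fin ℓ) : (s ^ b i) ^ (-(a i : ℤ)) = s ^ (-(α : ℤ)) := by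
    simp only [zpow_neg, zpow_natCast, ← pow_mul, mul_comm (b i), hab]
  have hsnd (r : Fin k) : ∏ i, (s ^ b i) ^ (c r * n i) = s ^ (c r * β) := by
    rw [← hβ, Finset.mul_sum, ← Finset.prod_pow_eq_pow_sum]
    refine Finset.prod_congr rfl fun i _ ↦ ?_
    rw [← pow_mul, ← hnb, mul_comm (b i), mul_assoc]
  simp only [actA, phiMap, actB, hfst, hsnd, mul_left_comm]

theorem actA_phiMap_eq_phiMap_iff (hm : ∀ i, 0 < m i) (hβ : 0 < β) {t : Fin ℓ → ℂ} {z w : PtB k} :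
    actA ℓ k a n c t (phiMap ℓ k m β z) = phiMap ℓ k m β w ↔
      (∀ i, t i ^ (-(a i : ℤ)) * z.1 = w.1) ∧ ∀ r, (∏ i, t i ^ (c r * n i)) * z.2 r = w.2 r := by
  have hsqrt (i : Fin ℓ) : (√((m i : ℝ) / β) : ℂ) ≠ 0 :=
    ofReal_sqrt_div_ne_zero (Nat.cast_pos.2 (hm i)) (Nat.cast_pos.2 hβ)
  simp only [actA, phiMap, Prod.ext_iff, funext_iff, mul_left_comm _ (ofReal _),
    mul_right_inj' (hsqrt _)]

theorem exists_actB_eq_of_fst_ne_zero [NeZero ℓ]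
    (hcop : Pairwise (Function.onFun Nat.Coprime a)) (hab : ∀ i, a i * ∏ j ∈ {i}ᶜ, a j = α)
    (hnb : ∀ i, n i * ∏ j ∈ {i}ᶜ, a j = m i) (hm : ∀ i, 0 < m i) (hβ : ∑ i, m i = β)
    {t : Fin ℓ → Circle} {z w : PtB k} (hz : z.1 ≠ 0)
    (ht : actA ℓ k a n c (fun i ↦ t i) (phiMap ℓ k m β z) = phiMap ℓ k m β w) :
    ∃ s : Circle, actB k α β c s z = w := by
  have hβ_pos : 0 < β := hβ ▸ Finset.sum_pos (fun i _ ↦ hm i) Finset.univ_nonempty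
  have hfst := ((actA_phiMap_eq_phiMap_iff hm hβ_pos).1 ht).1
  have htpow (i : Fin ℓ) : t i ^ a i = t 0 ^ a 0 := by
    have h := mul_right_cancel₀ hz ((hfst i).trans (hfst 0).symm)
    simpa only [zpow_neg, zpow_natCast, inv_inj, ← Circle.coe_pow, Circle.coe_inj] using h
  obtain ⟨s, hs⟩ := exists_forall_pow_prod_compl_eq hcop htpow
  refine ⟨s, (isClosedEmbedding_phiMap hβ_pos (hm 0)).injective ?_⟩
  simpa only [← hs, Circle.coe_pow, actA_pow_phiMap hab hnb hβ] using ht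

theorem exists_actB_eq_of_fst_eq_zero (hβ : β ≠ 0) {t : Fin ℓ → Circle} {z w : PtB k}
    (hz : z.1 = 0) (hw : w.1 = 0) (hsnd : ∀ r, (∏ i, (t i : ℂ) ^ (c r * n i)) * z.2 r = w.2 r) :
    ∃ s : Circle, actB k α β c s z = w := by
  obtain ⟨s, hs⟩ := exists_circle_pow_eq hβ (∏ i, t i ^ n i)
  have hs' : (s : ℂ) ^ β = ∏ i, (t i : ℂ) ^ n i := by
    rw [← Circle.coe_pow, hs]
    exact map_prod Circle.coeHom _ _
  refine ⟨s, Prod.ext (by simp [actB, hz, hw]) (funext fun r ↦ ?_)⟩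
  simp only [actB, ← hsnd, pow_mul', hs', Finset.prod_pow]

theorem exists_actB_eq_iff_exists_actA_phiMap_eq [NeZero ℓ]
    (hcop : Pairwise (Function.onFun Nat.Coprime a)) (hab : ∀ i, a i * ∏ j ∈ {i}ᶜ, a j = α)
    (hnb : ∀ i, n i * ∏ j ∈ {i}ᶜ, a j = m i) (hm : ∀ i, 0 < m i) (hβ : ∑ i, m i = β)
    {z w : PtB k} :
    (∃ s : Circle, actB k α β c s z = w) ↔
      ∃ t : Fin ℓ → Circle,
        actA ℓ k a n c (fun i ↦ t i) (phiMap ℓ k m β z) = phiMap ℓ k m β w := by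
  constructor
  · rintro ⟨s, rfl⟩
    exact ⟨fun i ↦ s ^ ∏ j ∈ {i}ᶜ, a j, actA_pow_phiMap hab hnb hβ s z⟩
  rintro ⟨t, ht⟩
  by_cases hz : z.1 = 0
  · have hβ_pos : 0 < β := hβ ▸ Finset.sum_pos (fun i _ ↦ hm i) Finset.univ_nonempty
    obtain ⟨hfst, hsnd⟩ := (actA_phiMap_eq_phiMap_iff hm hβ_pos).1 ht
    exact exists_actB_eq_of_fst_eq_zero hβ_pos.ne' hz (by rw [← hfst 0, hz, mul_zero]) hsnd
  · exact exists_actB_eq_of_fst_ne_zero hcop hab hnb hm hβ hz ht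

theorem relB_iff_relA_restrict_phiMap [NeZero ℓ] (hcop : Pairwise (Function.onFun Nat.Coprime a))
    (hab : ∀ i, a i * ∏ j ∈ {i}ᶜ, a j = α) (hnb : ∀ i, n i * ∏ j ∈ {i}ᶜ, a j = m i)
    (hm : ∀ i, 0 < m i) (hβ : ∑ i, m i = β)
    (hφ : Set.MapsTo (phiMap ℓ k m β) (shellB k α β c) (shellA ℓ k a n c)) {z w : shellB k α β c} :
    relB k α β c z w ↔ relA ℓ k a n c (hφ.restrict _ _ _ z) (hφ.restrict _ _ _ w) := by
  rw [relB_iff, relA_iff]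
  exact exists_actB_eq_iff_exists_actA_phiMap_eq hcop hab hnb hm hβ

end OrbitSpaces

theorem stmt7_general (ℓ k : ℕ) (hℓ : 1 ≤ ℓ)
    (a n : Fin ℓ → ℕ) (c : Fin k → ℕ)
    (ha : ∀ i, 0 < a i) (hn : ∀ i, 0 < n i)
    (hF1 : ∀ i j, i ≠ j → Nat.gcd (a i) (a j) = 1) :
    let α : ℕ := Finset.univ.lcm a
    let m : Fin ℓ → ℕ := fun i => n i * α / a i
    let β : ℕ := ∑ i, m i
    (∀ u ∈ shellA ℓ k a n c,
        ∃ t : Fin ℓ → ℂ, (∀ i, ‖t i‖ = 1) ∧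
          ∃ z ∈ shellB k α β c, actA ℓ k a n c t u = phiMap ℓ k m β z)
    ∧
    (∃ F : Quot (relB k α β c) ≃ₜ Quot (relA ℓ k a n c),
        ∀ (z : shellB k α β c) (u : shellA ℓ k a n c),
          phiMap ℓ k m β z.1 = u.1 →
          F (Quot.mk (relB k α β c) z) = Quot.mk (relA ℓ k a n c) u) := by
  intro α m β
  have : NeZero ℓ := ⟨Nat.one_le_iff_ne_zero.1 hℓ⟩
  have hcop : Pairwise (Function.onFun Nat.Coprime a) := hF1
  have hab : ∀ i, a i * ∏ j ∈ {i}ᶜ, a j = α := mul_prod_compl_eq_lcm hcop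
  have hnb (i : Fin ℓ) : n i * ∏ j ∈ {i}ᶜ, a j = m i := by
    simp only [m, ← hab i, mul_left_comm, Nat.mul_div_cancel_left _ (ha i)]
  have ham (i : Fin ℓ) : a i * m i = n i * α := by rw [← hnb, ← hab i, mul_left_comm]
  have hm (i : Fin ℓ) : 0 < m i := hnb i ▸ Nat.mul_pos (hn i) (Finset.prod_pos fun j _ ↦ ha j)
  have hα : 0 < α := hab 0 ▸ Nat.mul_pos (ha 0) (Finset.prod_pos fun j _ ↦ ha j)
  have hβ : 0 < β := Finset.sum_pos (fun i _ ↦ hm i) Finset.univ_nonempty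
  have hsurj (u) (hu : u ∈ shellA ℓ k a n c) := exists_actA_eq_phiMap ha hn hα hβ ham hu
  refine ⟨fun u hu ↦ exists_forall_norm_eq_one_and_iff.2 (hsurj u hu), ?_⟩
  have hφ : Set.MapsTo (phiMap ℓ k m β) (shellB k α β c) (shellA ℓ k a n c) :=
    fun _ ↦ (phiMap_mem_shellA_iff hn hβ ham).2
  obtain ⟨F, hF⟩ := exists_homeomorph_quot equivalence_relA isClosedMap_quot_mk_relA
    ((isClosedEmbedding_phiMap hβ (hm 0)).continuous.restrict hφ)
    (isClosedMap_restrict_phiMap hβ (hm 0) hφ)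
    (fun _ _ ↦ relB_iff_relA_restrict_phiMap hcop hab hnb hm rfl hφ)
    (fun u ↦ let ⟨t, z, hz, h⟩ := hsurj u u.2; ⟨⟨z, hz⟩, relA_iff.2 ⟨t, h⟩⟩)
  exact ⟨F, fun z u hzu ↦ (hF z).trans (congrArg _ (Subtype.ext hzu))⟩

/-- every point of `Z_A` lies in the `T^ℓ`-orbit of a point of `φ(Z_B)`;
consequently `[z] ↦ [φ(z)]` is a well-defined homeomorphism
`Z_B/T¹ → Z_A/T^ℓ` of the orbit spaces with their quotient topologies. -/
theorem stmt7 (ℓ k : ℕ) (hℓ : 1 ≤ ℓ) (hk : 1 ≤ k)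
    (a n : Fin ℓ → ℕ) (c : Fin k → ℕ)
    (ha : ∀ i, 0 < a i) (hn : ∀ i, 0 < n i) (hc : ∀ r, 0 < c r)
    (hF1 : ∀ i j, i ≠ j → Nat.gcd (a i) (a j) = 1)
    (hF2 : ∀ i, ∃ r, Nat.gcd (a i) (c r * n i) = 1) :
    let α : ℕ := Finset.univ.lcm a
    let m : Fin ℓ → ℕ := fun i => n i * α / a i
    let β : ℕ := ∑ i, m i
    (∀ u ∈ shellA ℓ k a n c,
        ∃ t : Fin ℓ → ℂ, (∀ i, ‖t i‖ = 1) ∧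
          ∃ z ∈ shellB k α β c, actA ℓ k a n c t u = phiMap ℓ k m β z)
    ∧
    (∃ F : Quot (relB k α β c) ≃ₜ Quot (relA ℓ k a n c),
        ∀ (z : shellB k α β c) (u : shellA ℓ k a n c),
          phiMap ℓ k m β z.1 = u.1 →
          F (Quot.mk (relB k α β c) z) = Quot.mk (relA ℓ k a n c) u) :=
  stmt7_general ℓ k hℓ a n c ha hn hF1
end

section
/- Let k ≥ 2 and k′ ≥ 1, and let α, β, α′, β′ be positive integers with gcd(α, β) = 1 and gcd(α′, β′) = 1. Consider P = ℂ[z_1,…,z_{k+1}, w_1,…,w_{k+1}] with the ℂ^×-action of weight row A = (−α, β, …, β) (k copies of β) and P′ = ℂ[z′_1,…,z′_{k′+1}, w′_1,…,w′_{k′+1}] with the ℂ^×-action of weight row B = (−α′, β′, …, β′) (k′ copies of β′). If the graded ℂ-algebras P^{inv}/(J_A) and (P′)^{inv}/(J_B) — the invariant subalgebras modulo the ideals generated by the moment polynomials J_A = −α z_1 w_1 + β Σ_{j=1}^k z_{1+j} w_{1+j} and J_B = −α′ z′_1 w′_1 + β′ Σ_{j=1}^{k′} z′_{1+j} w′_{1+j}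 — are isomorphic as graded ℂ-algebras, then k = k′, α = α′, and β = β′. -/
open Complex MvPolynomial

/-- The polynomial ring `P = ℂ[z, w]` with `z, w` each indexed by `Unit ⊕ Fin k`
(`Sum.inl ()` is the first coordinate `z_1` resp. `w_1`), so `P` has `2(k+1)` variables. -/
abbrev PB (k : ℕ) := MvPolynomial ((Unit ⊕ Fin k) ⊕ (Unit ⊕ Fin k)) ℂ

/-- The substitution action of `t ∈ ℂ^×` on `P` for the weight row `(-α, β, …, β)`:
`z_1 ↦ t^{-α} z_1`, `w_1 ↦ t^{α} w_1`, `z_{1+j} ↦ t^{β} z_{1+j}`, `w_{1+j} ↦ t^{-β} w_{1+j}`. -/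
noncomputable def actPB (k : ℕ) (α β : ℕ) (t : ℂ) : PB k →ₐ[ℂ] PB k :=
  aeval fun x => match x with
    | Sum.inl (Sum.inl _) => C (t ^ (-(α : ℤ))) * X (Sum.inl (Sum.inl ()))
    | Sum.inl (Sum.inr j) => C (t ^ (β : ℤ)) * X (Sum.inl (Sum.inr j))
    | Sum.inr (Sum.inl _) => C (t ^ (α : ℤ)) * X (Sum.inr (Sum.inl ()))
    | Sum.inr (Sum.inr j) => C (t ^ (-(β : ℤ))) * X (Sum.inr (Sum.inr j))

/-- The subalgebra of `ℂ^×`-invariant polynomials. -/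
noncomputable def invPB (k : ℕ) (α β : ℕ) : Subalgebra ℂ (PB k) where
  carrier := {f | ∀ t : ℂ, t ≠ 0 → actPB k α β t f = f}
  mul_mem' hf hg t ht := by rw [map_mul, hf t ht, hg t ht]
  add_mem' hf hg t ht := by rw [map_add, hf t ht, hg t ht]
  one_mem' t ht := map_one _
  zero_mem' t ht := map_zero _
  algebraMap_mem' r t ht := (actPB k α β t).commutes r

/-- The moment polynomial `J = -α z_1 w_1 + β Σ_j z_{1+j} w_{1+j}`. -/
noncomputable def JB (k : ℕ) (α β : ℕ) : PB k :=
  -(C ((α : ℂ)) * X (Sum.inl (Sum.inl ())) * X (Sum.inr (Sum.inl ())))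
    + C ((β : ℂ)) * ∑ j, X (Sum.inl (Sum.inr j)) * X (Sum.inr (Sum.inr j))

/-- The ideal of the invariant subalgebra generated by the moment polynomial. -/
noncomputable def idealB (k : ℕ) (α β : ℕ) : Ideal (invPB k α β) :=
  Ideal.span {f : invPB k α β | (f : PB k) = JB k α β}

/-!
The triple `(k, α, β)` is read off the Hilbert function of the graded algebra. An invariant
polynomial is a combination of monomials of weight zero, and the moment polynomial is a
nonzerodivisor of degree two, so the dimension in degree `n + 2` is `N (n + 2) - N n`, where `N n`
counts the weight-zero monomials of degree `n`. For coprime `α` and `β`, a monomial of weight zero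
and degree less than `α + β` is balanced: it contains `z₁` as often as `w₁`, and as many of the
other `z`'s as of the other `w`'s. This condition depends on `k` only. In degree `α + β` the
unbalanced invariants are `z₁ ^ β` times a monomial of degree `α` in the other `z`'s, and likewise
for `w`, which adds `2 * Nat.multichoose k α` to the count. The degree-two part determines `k`, the
first degree where the count exceeds the balanced one is `α + β`, and the excess determines `α`.
-/

section HypersurfaceDimension

variable {K R ι : Type*} [Field K] [CommRing R] [Algebra K R]

/-- The degree-`i` part of a subalgebra `S` of an algebra with graded pieces `𝒜 i`, as a subspace
of `S`. -/
def gradedPiece (𝒜 : ι → Submodule K R) (S : Subalgebra K R) (i : ι) : Submodule K S :=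
  (𝒜 i).comap S.val.toLinearMap

theorem finrank_map_add_finrank_inf_ker {V W : Type*} [AddCommGroup V] [Module K V]
    [AddCommGroup W] [Module K W] (q : V →ₗ[K] W) (U : Submodule K V) [FiniteDimensional K U] :
    Module.finrank K (U.map q) + Module.finrank K (U ⊓ LinearMap.ker q : Submodule K V) =
      Module.finrank K U := by
  rw [← LinearMap.finrank_range_add_finrank_ker (q.domRestrict U), LinearMap.range_domRestrict,
    LinearMap.ker_domRestrict, ← Submodule.finrank_map_subtype_eq, Submodule.map_comap_subtype]

variable [DecidableEq ι] [AddLeftCancelMonoid ι] (𝒜 : ι → Submodule K R) [GradedAlgebra 𝒜]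
  {S : Subalgebra K R}

theorem gradedPiece_inf_ker_mk_span_singleton (hS : DirectSum.SetLike.IsHomogeneous 𝒜 S) {i : ι}
    {a : S} (ha : (a : R) ∈ 𝒜 i) (j : ι) :
    gradedPiece 𝒜 S (i + j) ⊓ LinearMap.ker (Ideal.Quotient.mkₐ K (Ideal.span {a})).toLinearMap =
      (gradedPiece 𝒜 S j).map (LinearMap.mulLeft K a) := by
  ext x
  simp only [Submodule.mem_inf, LinearMap.mem_ker, AlgHom.toLinearMap_apply,
    Ideal.Quotient.mkₐ_eq_mk, Ideal.Quotient.eq_zero_iff_mem, Ideal.mem_span_singleton,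
    Submodule.mem_map, LinearMap.mulLeft_apply]
  constructor
  · rintro ⟨hx, y, rfl⟩
    refine ⟨⟨_, hS j y.2⟩, (DirectSum.decompose 𝒜 (y : R) j).2, Subtype.ext ?_⟩
    exact (DirectSum.coe_decompose_mul_add_of_left_mem 𝒜 ha).symm.trans
      (DirectSum.decompose_of_mem_same 𝒜 hx)
  · rintro ⟨y, hy, rfl⟩
    exact ⟨SetLike.mul_mem_graded (A := 𝒜) ha hy, dvd_mul_right a y⟩

theorem finrank_map_mk_span_singleton_add_finrank [IsDomain R]
    (hS : DirectSum.SetLike.IsHomogeneous 𝒜 S) {i : ι} {a : S} (ha : (a : R) ∈ 𝒜 i) (ha₀ : a ≠ 0)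
    (j : ι) [FiniteDimensional K (gradedPiece 𝒜 S (i + j))] :
    Module.finrank K
        ((gradedPiece 𝒜 S (i + j)).map (Ideal.Quotient.mkₐ K (Ideal.span {a})).toLinearMap) +
      Module.finrank K (gradedPiece 𝒜 S j) = Module.finrank K (gradedPiece 𝒜 S (i + j)) := by
  have hinj : Function.Injective (LinearMap.mulLeft K a) := mul_right_injective₀ ha₀
  rw [(Submodule.equivMapOfInjective _ hinj (gradedPiece 𝒜 S j)).finrank_eq,
    ← gradedPiece_inf_ker_mk_span_singleton 𝒜 hS ha, finrank_map_add_finrank_inf_ker]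

end HypersurfaceDimension

section TorusInvariants

variable {σ K : Type*} [Field K]

theorem coeff_aeval_C_mul_X {R : Type*} [CommSemiring R] (c : σ → R) (f : MvPolynomial σ R)
    (d : σ →₀ ℕ) :
    coeff d (aeval (fun x ↦ C (c x) * X x) f) = d.prod (fun x n ↦ c x ^ n) * coeff d f := by
  classical
  induction f using MvPolynomial.induction_on' with
  | monomial u r =>
    have hu : aeval (fun x ↦ C (c x) * X x : σ → MvPolynomial σ R) (monomial u r) =
        monomial u (u.prod (fun x n ↦ c x ^ n) * r) := by
      rw [aeval_monomial, monomial_eq (s := u), algebraMap_eq, C_mul, Finsupp.prod, Finsupp.prod,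
        Finsupp.prod]
      simp only [mul_pow, Finset.prod_mul_distrib, map_prod, map_pow]
      ring
    rw [hu, coeff_monomial, coeff_monomial]
    split_ifs with h
    · rw [h]
    · rw [mul_zero]
  | add p q hp hq => rw [map_add, coeff_add, coeff_add, hp, hq, mul_add]

theorem prod_zpow_eq_zpow_weight {t : K} (ht : t ≠ 0) (w : σ → ℤ) (d : σ →₀ ℕ) :
    d.prod (fun x n ↦ (t ^ w x) ^ n) = t ^ Finsupp.weight w d := by
  induction d using Finsupp.induction_linear with
  | zero => simp
  | add f g hf hg =>
    rw [Finsupp.prod_add_index' (fun _ ↦ pow_zero _) fun _ _ _ ↦ pow_add _ _ _, hf, hg, map_add,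
      zpow_add₀ ht]
  | single x n =>
    rw [Finsupp.prod_single_index (h := fun x n ↦ (t ^ w x) ^ n) (pow_zero _),
      Finsupp.weight_single, nsmul_eq_mul, mul_comm, zpow_mul, zpow_natCast]

theorem exists_zpow_ne_one [Infinite K] {m : ℤ} (hm : m ≠ 0) : ∃ t : K, t ≠ 0 ∧ t ^ m ≠ 1 := by
  classical
  obtain ⟨t, ht⟩ := (insert 0 (Polynomial.nthRootsFinset m.natAbs (1 : K))).exists_notMem
  rw [Finset.mem_insert, not_or, Polynomial.mem_nthRootsFinset (Int.natAbs_pos.mpr hm)] at ht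
  refine ⟨t, ht.1, fun h ↦ ht.2 ?_⟩
  rcases Int.natAbs_eq m with hm' | hm' <;> rw [hm'] at h
  · exact_mod_cast h
  · rwa [zpow_neg, inv_eq_one, zpow_natCast] at h

theorem forall_aeval_zpow_eq_self_iff [Infinite K] (w : σ → ℤ) (f : MvPolynomial σ K) :
    (∀ t : K, t ≠ 0 → aeval (fun x ↦ C (t ^ w x) * X x) f = f) ↔ f.IsWeightedHomogeneous w 0 := by
  constructor
  · intro h d hd
    by_contra hw
    obtain ⟨t, ht, htw⟩ := exists_zpow_ne_one (K := K) hw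
    have hcoeff := congrArg (coeff d) (h t ht)
    rw [coeff_aeval_C_mul_X, prod_zpow_eq_zpow_weight ht] at hcoeff
    exact htw (mul_right_cancel₀ hd (hcoeff.trans (one_mul _).symm))
  · intro h t ht
    ext d
    rw [coeff_aeval_C_mul_X, prod_zpow_eq_zpow_weight ht]
    by_cases hd : coeff d f = 0
    · rw [hd, mul_zero]
    · rw [h hd, zpow_zero, one_mul]

end TorusInvariants

section WeightZeroSubalgebra

attribute [local instance] MvPolynomial.gradedAlgebra

variable {σ K M : Type*} [Field K] [AddCommMonoid M] {w : σ → M}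
  {S : Subalgebra K (MvPolynomial σ K)}

/-- The exponents of the monomials of degree `n` and `w`-weight zero. For integer weights these are
the monomials invariant under the one-dimensional torus acting with weights `w`. -/
def weightZeroExponents (w : σ → M) (n : ℕ) : Set (σ →₀ ℕ) :=
  {d | d.degree = n ∧ Finsupp.weight w d = 0}

theorem isHomogeneous_of_mem_iff_weight_zero (hS : ∀ f, f ∈ S ↔ f.IsWeightedHomogeneous w 0) :
    DirectSum.SetLike.IsHomogeneous (homogeneousSubmodule σ K) S := by
  intro n f hf
  rw [hS] at hf ⊢
  intro d hd
  have hcomp : (DirectSum.decompose (homogeneousSubmodule σ K) f n : MvPolynomial σ K) =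
      homogeneousComponent n f := decomposition.decompose'_apply f n
  rw [hcomp, coeff_homogeneousComponent] at hd
  exact hf (ite_ne_right_iff.mp hd).2

/-- The degree-`n` part of the algebra of weight-zero polynomials is the span of the monomials of
degree `n` and weight zero. -/
noncomputable def gradedPieceEquivRestrictSupport
    (hS : ∀ f, f ∈ S ↔ f.IsWeightedHomogeneous w 0) (n : ℕ) :
    gradedPiece (homogeneousSubmodule σ K) S n ≃ₗ[K] restrictSupport K (weightZeroExponents w n) :=
  have hle : restrictSupport K (weightZeroExponents w n) ≤ Subalgebra.toSubmodule S :=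
    fun _ hf ↦ (hS _).mpr fun _ hd ↦ (hf (mem_support_iff.mpr hd)).2
  have hpiece : gradedPiece (homogeneousSubmodule σ K) S n =
      (restrictSupport K (weightZeroExponents w n)).comap (Subalgebra.toSubmodule S).subtype := by
    rw [gradedPiece, homogeneousSubmodule_eq_finsupp_supported]
    ext f
    exact ⟨fun hf _ hd ↦ ⟨hf hd, (hS f).mp f.2 (mem_support_iff.mp hd)⟩, fun hf _ hd ↦ (hf hd).1⟩
  (LinearEquiv.ofEq _ _ hpiece).trans (Submodule.comapSubtypeEquivOfLe hle)

theorem finite_weightZeroExponents [Finite σ] (w : σ → M) (n : ℕ) :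
    (weightZeroExponents w n).Finite :=
  (Finsupp.finite_of_degree_eq n).subset fun _ hd ↦ hd.1

theorem finiteDimensional_gradedPiece [Finite σ] (hS : ∀ f, f ∈ S ↔ f.IsWeightedHomogeneous w 0)
    (n : ℕ) : FiniteDimensional K (gradedPiece (homogeneousSubmodule σ K) S n) :=
  have := (finite_weightZeroExponents w n).to_subtype
  .of_basis ((basisRestrictSupport K _).map (gradedPieceEquivRestrictSupport hS n).symm)

theorem finrank_gradedPiece (hS : ∀ f, f ∈ S ↔ f.IsWeightedHomogeneous w 0) (n : ℕ) :
    Module.finrank K (gradedPiece (homogeneousSubmodule σ K) S n) =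
      (weightZeroExponents w n).ncard :=
  Module.finrank_eq_nat_card_basis
    ((basisRestrictSupport K _).map (gradedPieceEquivRestrictSupport hS n).symm)

theorem finrank_map_mk_add_ncard_weightZeroExponents [Finite σ]
    (hS : ∀ f, f ∈ S ↔ f.IsWeightedHomogeneous w 0) {I : Ideal S} {a : S}
    (hI : I = Ideal.span {a}) {i : ℕ} (ha : (a : MvPolynomial σ K).IsHomogeneous i) (ha₀ : a ≠ 0)
    (j : ℕ) :
    Module.finrank K ((gradedPiece (homogeneousSubmodule σ K) S (i + j)).map
        (Ideal.Quotient.mkₐ K I).toLinearMap) + (weightZeroExponents w j).ncard =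
      (weightZeroExponents w (i + j)).ncard := by
  subst hI
  have := finiteDimensional_gradedPiece hS (i + j)
  rw [← finrank_gradedPiece hS, ← finrank_gradedPiece hS]
  exact finrank_map_mk_span_singleton_add_finrank _ (isHomogeneous_of_mem_iff_weight_zero hS) ha
    ha₀ j

end WeightZeroSubalgebra

section MomentMap

/-- The index type of the variables `z₁, …, z_{k+1}, w₁, …, w_{k+1}` of `PB k`. -/
abbrev PBIndex (k : ℕ) := (Unit ⊕ Fin k) ⊕ (Unit ⊕ Fin k)

/-- The weights with which `ℂ^×` acts on the variables of `PB k` for the weight row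
`(-α, β, …, β)`: the row itself on the `z`'s and its negative on the `w`'s. -/
def cotangentWeight (k α β : ℕ) : PBIndex k → ℤ :=
  Sum.elim (Sum.elim (fun _ ↦ -α) fun _ ↦ β) (Sum.elim (fun _ ↦ α) fun _ ↦ -β)

theorem actPB_eq_aeval (k α β : ℕ) (t : ℂ) :
    actPB k α β t = aeval fun x ↦ C (t ^ cotangentWeight k α β x) * X x := by
  unfold actPB
  congr 1
  funext x
  rcases x with (x | x) | (x | x) <;> rfl

theorem mem_invPB_iff (k α β : ℕ) (f : PB k) :
    f ∈ invPB k α β ↔ f.IsWeightedHomogeneous (cotangentWeight k α β) 0 := by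
  rw [← forall_aeval_zpow_eq_self_iff]
  simp only [← actPB_eq_aeval]
  rfl

theorem JB_mem_invPB (k α β : ℕ) : JB k α β ∈ invPB k α β := by
  have hX (a b : PBIndex k) (hab : cotangentWeight k α β a + cotangentWeight k α β b = 0) :
      (X a * X b : PB k).IsWeightedHomogeneous (cotangentWeight k α β) 0 :=
    hab ▸ (isWeightedHomogeneous_X ℂ _ a).mul (isWeightedHomogeneous_X ℂ _ b)
  rw [mem_invPB_iff, JB, mul_assoc]
  exact ((hX _ _ (by simp [cotangentWeight])).C_mul _).neg.add
    ((IsWeightedHomogeneous.sum _ _ _ fun j _ ↦ hX _ _ (by simp [cotangentWeight])).C_mul _)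

theorem JB_isHomogeneous (k α β : ℕ) : (JB k α β).IsHomogeneous 2 := by
  have hX (a b : PBIndex k) : (X a * X b : PB k).IsHomogeneous 2 :=
    (isHomogeneous_X ℂ a).mul (isHomogeneous_X ℂ b)
  rw [JB, mul_assoc]
  exact ((hX _ _).C_mul _).neg.add ((IsHomogeneous.sum _ _ _ fun j _ ↦ hX _ _).C_mul _)

theorem JB_ne_zero (k β : ℕ) {α : ℕ} (hα : 0 < α) : JB k α β ≠ 0 := by
  intro h
  have heval := congrArg (eval (Sum.elim (Sum.elim 1 0) (Sum.elim 1 0))) h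
  simp only [JB, map_add, map_neg, map_mul, map_sum, eval_C, eval_X, map_zero, Sum.elim_inl,
    Sum.elim_inr, Pi.one_apply, Pi.zero_apply, mul_one, mul_zero, Finset.sum_const_zero, add_zero,
    neg_eq_zero, Nat.cast_eq_zero] at heval
  exact hα.ne' heval

/-- The moment polynomial as an element of the invariant algebra. -/
noncomputable def momentInvariant (k α β : ℕ) : invPB k α β :=
  ⟨JB k α β, JB_mem_invPB k α β⟩

theorem idealB_eq_span (k α β : ℕ) : idealB k α β = Ideal.span {momentInvariant k α β} := by
  rw [idealB]
  congr 1
  ext f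
  rw [Set.mem_ofPred_eq, Set.mem_singleton_iff, Subtype.ext_iff, momentInvariant]

/-- The Hilbert function of the algebra of regular functions on the symplectic quotient with weight
row `(-α, β, …, β)`: the dimension of its degree-`n` part. -/
noncomputable def hilbertFunction (k α β n : ℕ) : ℕ :=
  Module.finrank ℂ ((gradedPiece (homogeneousSubmodule (PBIndex k) ℂ) (invPB k α β) n).map
    (Ideal.Quotient.mkₐ ℂ (idealB k α β)).toLinearMap)

theorem hilbertFunction_eq_of_linearEquiv {k α β k' α' β' : ℕ}
    (Φ : (invPB k α β ⧸ idealB k α β) ≃ₗ[ℂ] (invPB k' α' β' ⧸ idealB k' α' β')) {n : ℕ}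
    (hΦ : Φ '' (Ideal.Quotient.mk (idealB k α β) ''
        {f : invPB k α β | (f : PB k).IsHomogeneous n}) =
      Ideal.Quotient.mk (idealB k' α' β') ''
        {g : invPB k' α' β' | (g : PB k').IsHomogeneous n}) :
    hilbertFunction k α β n = hilbertFunction k' α' β' n := by
  rw [hilbertFunction, ← Φ.finrank_map_eq]
  exact congrArg (fun U : Submodule ℂ _ ↦ Module.finrank ℂ U) (SetLike.coe_injective hΦ)

theorem hilbertFunction_add_two_add_ncard (k β : ℕ) {α : ℕ} (hα : 0 < α) (n : ℕ) :
    hilbertFunction k α β (n + 2) + (weightZeroExponents (cotangentWeight k α β) n).ncard =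
      (weightZeroExponents (cotangentWeight k α β) (n + 2)).ncard := by
  have hJ₀ : momentInvariant k α β ≠ 0 := fun h ↦ JB_ne_zero k β hα (congrArg Subtype.val h)
  rw [hilbertFunction, add_comm n 2]
  exact finrank_map_mk_add_ncard_weightZeroExponents (mem_invPB_iff k α β) (idealB_eq_span k α β)
    (JB_isHomogeneous k α β) hJ₀ n

end MomentMap

section Multichoose

theorem natCard_subtype_sum_eq (ι : Type*) [Fintype ι] (n : ℕ) :
    Nat.card {P : ι → ℕ // ∑ i, P i = n} = Nat.multichoose (Fintype.card ι) n := by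
  classical
  rw [← Nat.card_congr (Sym.equivNatSumOfFintype ι n), Nat.card_eq_fintype_card,
    Sym.card_sym_eq_multichoose]

theorem multichoose_pos {k : ℕ} (hk : 0 < k) (n : ℕ) : 0 < Nat.multichoose k n := by
  rw [Nat.multichoose_eq]
  exact Nat.choose_pos (by omega)

theorem multichoose_strictMono {k : ℕ} (hk : 2 ≤ k) : StrictMono (Nat.multichoose k) := by
  obtain ⟨k, rfl⟩ := Nat.exists_eq_add_of_le' hk
  refine strictMono_nat_of_lt_succ fun n ↦ ?_
  rw [Nat.multichoose_succ_succ]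
  exact Nat.lt_add_of_pos_left (multichoose_pos k.succ_pos (n + 1))

end Multichoose

section ExponentCounts

variable {k α β n : ℕ}

theorem exists_eq_mul_of_isCoprime_of_mul_eq_mul {R : Type*} [CommRing R] {a b x y : R}
    (hab : IsCoprime a b) (h : b * x = a * y) : ∃ m, x = a * m ∧ y = b * m := by
  obtain ⟨u, v, huv⟩ := hab
  refine ⟨u * x + v * y, ?_, ?_⟩
  · linear_combination -x * huv + v * h
  · linear_combination -y * huv - u * h

theorem degree_eq_add_sums (d : PBIndex k →₀ ℕ) :
    d.degree = d (.inl (.inl ())) + ∑ j, d (.inl (.inr j)) +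
      (d (.inr (.inl ())) + ∑ j, d (.inr (.inr j))) := by
  simp only [Finsupp.degree_eq_sum, Fintype.sum_sum_type, Fintype.sum_unique, PUnit.default_eq_unit]

theorem weight_cotangentWeight (d : PBIndex k →₀ ℕ) :
    Finsupp.weight (cotangentWeight k α β) d =
      β * (((∑ j, d (.inl (.inr j)) : ℕ) : ℤ) - (∑ j, d (.inr (.inr j)) : ℕ)) -
        α * ((d (.inl (.inl ())) : ℤ) - d (.inr (.inl ()))) := by
  simp only [Finsupp.weight_eq_sum, Fintype.sum_sum_type, cotangentWeight, Sum.elim_inl,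
    Sum.elim_inr, Fintype.sum_unique, PUnit.default_eq_unit, nsmul_eq_mul, ← Finset.sum_mul,
    Nat.cast_sum]
  ring

theorem mem_weightZeroExponents_iff (hcop : α.Coprime β) {d : PBIndex k →₀ ℕ} :
    d ∈ weightZeroExponents (cotangentWeight k α β) n ↔ d.degree = n ∧ ∃ m : ℤ,
      (d (.inl (.inl ())) : ℤ) - d (.inr (.inl ())) = β * m ∧
      ((∑ j, d (.inl (.inr j)) : ℕ) : ℤ) - (∑ j, d (.inr (.inr j)) : ℕ) = α * m := by
  rw [weightZeroExponents, Set.mem_ofPred_eq, weight_cotangentWeight, sub_eq_zero]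
  refine and_congr_right fun _ ↦ ⟨fun h ↦ ?_, fun ⟨m, hx, hy⟩ ↦ ?_⟩
  · exact exists_eq_mul_of_isCoprime_of_mul_eq_mul (Nat.isCoprime_iff_coprime.mpr hcop.symm) h.symm
  · rw [hx, hy, mul_left_comm]

/-- The exponents of degree `n` with equal exponents of `z₁` and `w₁` and equal total degrees in the
remaining `z`'s and `w`'s: the monomials of degree `n` which are invariant for every weight row
`(-α, β, …, β)`. -/
def balancedExponents (k n : ℕ) : Set (PBIndex k →₀ ℕ) :=
  {d | d.degree = n ∧ d (.inl (.inl ())) = d (.inr (.inl ())) ∧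
    ∑ j, d (.inl (.inr j)) = ∑ j, d (.inr (.inr j))}

/-- The exponents of the monomials of degree `a` in `z₁`, `b` in `w₁`, `c` in `z₂, …, z_{k+1}` and
`e` in `w₂, …, w_{k+1}`. -/
def multidegreeExponents (k a b c e : ℕ) : Set (PBIndex k →₀ ℕ) :=
  {d | d (.inl (.inl ())) = a ∧ d (.inr (.inl ())) = b ∧
    ∑ j, d (.inl (.inr j)) = c ∧ ∑ j, d (.inr (.inr j)) = e}

theorem finite_balancedExponents (k n : ℕ) : (balancedExponents k n).Finite :=
  (Finsupp.finite_of_degree_eq n).subset fun _ hd ↦ hd.1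

theorem finite_multidegreeExponents (k a b c e : ℕ) : (multidegreeExponents k a b c e).Finite :=
  (Finsupp.finite_of_degree_eq (a + c + (b + e))).subset fun d ⟨ha, hb, hc, he⟩ ↦ by
    rw [Set.mem_ofPred_eq, degree_eq_add_sums, ha, hb, hc, he]

theorem ncard_multidegreeExponents (k a b c e : ℕ) :
    (multidegreeExponents k a b c e).ncard = Nat.multichoose k c * Nat.multichoose k e := by
  let equivProd : multidegreeExponents k a b c e ≃
      {P : Fin k → ℕ // ∑ i, P i = c} × {P : Fin k → ℕ // ∑ i, P i = e} :=
    { toFun := fun d ↦ (⟨fun j ↦ d.1 (.inl (.inr j)), d.2.2.2.1⟩,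
        ⟨fun j ↦ d.1 (.inr (.inr j)), d.2.2.2.2⟩)
      invFun := fun P ↦ ⟨Finsupp.equivFunOnFinite.symm
        (Sum.elim (Sum.elim (fun _ ↦ a) P.1.1) (Sum.elim (fun _ ↦ b) P.2.1)),
        rfl, rfl, P.1.2, P.2.2⟩
      left_inv := by
        rintro ⟨d, rfl, rfl, _⟩
        refine Subtype.ext (Finsupp.ext ?_)
        rintro ((_ | _) | (_ | _)) <;> rfl
      right_inv := fun _ ↦ rfl }
  rw [← Nat.card_coe_set_eq, Nat.card_congr equivProd, Nat.card_prod, natCard_subtype_sum_eq,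
    natCard_subtype_sum_eq, Fintype.card_fin]

theorem disjoint_multidegreeExponents {a b c e a' b' c' e' : ℕ} (h : a ≠ a') :
    Disjoint (multidegreeExponents k a b c e) (multidegreeExponents k a' b' c' e') :=
  Set.disjoint_left.mpr fun _ hd hd' ↦ h (hd.1.symm.trans hd'.1)

theorem ncard_balancedExponents_zero (k : ℕ) : (balancedExponents k 0).ncard = 1 := by
  have heq : balancedExponents k 0 = multidegreeExponents k 0 0 0 0 := by
    ext d
    simp only [balancedExponents, multidegreeExponents, Set.mem_ofPred_eq, degree_eq_add_sums]
    omega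
  rw [heq, ncard_multidegreeExponents, Nat.multichoose_zero_right, one_mul]

theorem ncard_balancedExponents_two (k : ℕ) : (balancedExponents k 2).ncard = k * k + 1 := by
  have heq : balancedExponents k 2 =
      multidegreeExponents k 0 0 1 1 ∪ multidegreeExponents k 1 1 0 0 := by
    ext d
    simp only [balancedExponents, multidegreeExponents, Set.mem_union, Set.mem_ofPred_eq,
      degree_eq_add_sums]
    omega
  rw [heq, Set.ncard_union_eq (disjoint_multidegreeExponents zero_ne_one)
    (finite_multidegreeExponents ..) (finite_multidegreeExponents ..), ncard_multidegreeExponents,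
    ncard_multidegreeExponents, Nat.multichoose_one_right, Nat.multichoose_zero_right, one_mul]

theorem abs_mul_add_le_degree {d : PBIndex k →₀ ℕ} {m : ℤ}
    (hx : (d (.inl (.inl ())) : ℤ) - d (.inr (.inl ())) = β * m)
    (hy : ((∑ j, d (.inl (.inr j)) : ℕ) : ℤ) - (∑ j, d (.inr (.inr j)) : ℕ) = α * m) :
    |m| * (α + β) ≤ d.degree := by
  have habs (c : ℕ) : |m| * c = |c * m| := by rw [abs_mul, Nat.abs_cast, mul_comm]
  rw [mul_add, habs, habs, ← hx, ← hy, degree_eq_add_sums]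
  grind

theorem weightZeroExponents_eq_balancedExponents (hcop : α.Coprime β) (hn : n < α + β) :
    weightZeroExponents (cotangentWeight k α β) n = balancedExponents k n := by
  ext d
  rw [mem_weightZeroExponents_iff hcop, balancedExponents, Set.mem_ofPred_eq]
  refine and_congr_right fun hd ↦ ⟨?_, fun ⟨hx, hy⟩ ↦ ⟨0, by simp [hx], by simp [hy]⟩⟩
  rintro ⟨m, hx, hy⟩
  have hlt : |m| * (α + β) < 1 * (α + β) := by
    have hle := abs_mul_add_le_degree hx hy
    omega
  have hm : m = 0 := Int.abs_lt_one_iff.mp (lt_of_mul_lt_mul_right hlt (by positivity))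
  rw [hm, mul_zero] at hx hy
  omega

theorem weightZeroExponents_add (hβ : 0 < β) (hcop : α.Coprime β) :
    weightZeroExponents (cotangentWeight k α β) (α + β) = balancedExponents k (α + β) ∪
      (multidegreeExponents k β 0 α 0 ∪ multidegreeExponents k 0 β 0 α) := by
  ext d
  rw [mem_weightZeroExponents_iff hcop]
  simp only [balancedExponents, multidegreeExponents, Set.mem_union, Set.mem_ofPred_eq]
  constructor
  · rintro ⟨hd, m, hx, hy⟩
    have hle : |m| * (α + β) ≤ 1 * (α + β) := by
      have hle := abs_mul_add_le_degree hx hy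
      omega
    have hm : |m| ≤ 1 := le_of_mul_le_mul_right hle (by positivity)
    rw [degree_eq_add_sums] at hd ⊢
    rcases Int.abs_le_one_iff.mp hm with rfl | rfl | rfl <;> omega
  · rw [degree_eq_add_sums]
    rintro (⟨hd, hx, hy⟩ | hd | hd)
    · exact ⟨hd, 0, by omega, by omega⟩
    · exact ⟨by omega, 1, by omega, by omega⟩
    · exact ⟨by omega, -1, by omega, by omega⟩

theorem ncard_weightZeroExponents (k : ℕ) (hβ : 0 < β) (hcop : α.Coprime β) (hn : n ≤ α + β) :
    (weightZeroExponents (cotangentWeight k α β) n).ncard =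
      (balancedExponents k n).ncard + if n = α + β then 2 * Nat.multichoose k α else 0 := by
  split_ifs with h
  · subst h
    have hdisj : Disjoint (balancedExponents k (α + β))
        (multidegreeExponents k β 0 α 0 ∪ multidegreeExponents k 0 β 0 α) :=
      Set.disjoint_left.mpr fun d hd hd' ↦ by
        simp only [balancedExponents, multidegreeExponents, Set.mem_union,
          Set.mem_ofPred_eq] at hd hd'
        omega
    rw [weightZeroExponents_add hβ hcop, Set.ncard_union_eq hdisj (finite_balancedExponents ..)
      ((finite_multidegreeExponents ..).union (finite_multidegreeExponents ..)),
      Set.ncard_union_eq (disjoint_multidegreeExponents hβ.ne') (finite_multidegreeExponents ..)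
      (finite_multidegreeExponents ..), ncard_multidegreeExponents, ncard_multidegreeExponents,
      Nat.multichoose_zero_right, mul_one, one_mul, two_mul]
  · rw [weightZeroExponents_eq_balancedExponents hcop (hn.lt_of_ne h), add_zero]

end ExponentCounts

section Reconstruction

variable {α β : ℕ}

theorem hilbertFunction_add_ncard_balancedExponents (k : ℕ) {n : ℕ} (hα : 0 < α) (hβ : 0 < β)
    (hcop : α.Coprime β) (hn : n + 2 ≤ α + β) :
    hilbertFunction k α β (n + 2) + (balancedExponents k n).ncard =
      (balancedExponents k (n + 2)).ncard +
        if n + 2 = α + β then 2 * Nat.multichoose k α else 0 := by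
  rw [← ncard_weightZeroExponents k hβ hcop hn, ← hilbertFunction_add_two_add_ncard k β hα,
    weightZeroExponents_eq_balancedExponents hcop (by omega)]

theorem sqrt_hilbertFunction_two (k : ℕ) (hα : 0 < α) (hβ : 0 < β) (hcop : α.Coprime β) :
    Nat.sqrt (hilbertFunction k α β 2) = k := by
  have h := hilbertFunction_add_ncard_balancedExponents k (n := 0) hα hβ hcop (by omega)
  rw [zero_add, ncard_balancedExponents_zero, ncard_balancedExponents_two, add_right_comm,
    Nat.add_right_cancel_iff] at h
  rw [h]
  refine Nat.sqrt_add_eq k ?_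
  split_ifs with h₂
  · obtain rfl : α = 1 := by omega
    rw [Nat.multichoose_one_right, two_mul]
  · exact Nat.zero_le _

theorem weights_eq_of_hilbertFunction_eq {k α' β' : ℕ} (hk : 2 ≤ k) (hα : 0 < α) (hβ : 0 < β)
    (hα' : 0 < α') (hβ' : 0 < β') (hcop : α.Coprime β) (hcop' : α'.Coprime β')
    (h : ∀ n, hilbertFunction k α β n = hilbertFunction k α' β' n) : α = α' ∧ β = β' := by
  wlog hle : α + β ≤ α' + β' generalizing α β α' β'
  · exact (this hα' hβ' hα hβ hcop' hcop (fun n ↦ (h n).symm) (by omega)).imp Eq.symm Eq.symm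
  obtain ⟨n, hn⟩ := Nat.exists_eq_add_of_le' (show 2 ≤ α + β by omega)
  have hexcess : 2 * Nat.multichoose k α =
      if n + 2 = α' + β' then 2 * Nat.multichoose k α' else 0 := by
    have h₁ := hilbertFunction_add_ncard_balancedExponents k hα hβ hcop hn.ge
    have h₂ := hilbertFunction_add_ncard_balancedExponents k hα' hβ' hcop' (hn ▸ hle)
    rw [if_pos hn.symm, h] at h₁
    exact Nat.add_left_cancel (h₁.symm.trans h₂)
  have hpos : 0 < Nat.multichoose k α := multichoose_pos (by omega) α
  split_ifs at hexcess with hsum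
  · have hαα' : α = α' := (multichoose_strictMono hk).injective (by omega)
    exact ⟨hαα', by omega⟩
  · omega

theorem stmt14_general {k k' α' β' : ℕ} (hk : 2 ≤ k) (hα : 0 < α) (hβ : 0 < β) (hα' : 0 < α')
    (hβ' : 0 < β') (hcop : α.Coprime β) (hcop' : α'.Coprime β')
    (h : ∀ n, hilbertFunction k α β n = hilbertFunction k' α' β' n) :
    k = k' ∧ α = α' ∧ β = β' := by
  obtain rfl : k = k' := by
    rw [← sqrt_hilbertFunction_two k hα hβ hcop, h, sqrt_hilbertFunction_two k' hα' hβ' hcop']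
  exact ⟨rfl, weights_eq_of_hilbertFunction_eq hk hα hβ hα' hβ' hcop hcop' h⟩

end Reconstruction

/-- for `k ≥ 2`, if the graded algebras of regular functions of the
`ℂ^×`-symplectic quotients of `(-α, β, …, β)` (`k` copies) and `(-α', β', …, β')`
(`k'` copies) are isomorphic as graded ℂ-algebras, then `k = k'`, `α = α'`, `β = β'`. -/
theorem stmt14 (k k' : ℕ) (hk : 2 ≤ k) (hk' : 1 ≤ k')
    (α β α' β' : ℕ) (hα : 0 < α) (hβ : 0 < β) (hα' : 0 < α') (hβ' : 0 < β')
    (hcop : Nat.gcd α β = 1) (hcop' : Nat.gcd α' β' = 1)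
    (H : ∃ Φ : (invPB k α β ⧸ idealB k α β) ≃ₐ[ℂ] (invPB k' α' β' ⧸ idealB k' α' β'),
      ∀ d : ℕ,
        Φ '' (Ideal.Quotient.mk (idealB k α β) ''
            {f : invPB k α β | ((f : PB k)).IsHomogeneous d})
          = Ideal.Quotient.mk (idealB k' α' β') ''
            {g : invPB k' α' β' | ((g : PB k')).IsHomogeneous d}) :
    k = k' ∧ α = α' ∧ β = β' := by
  obtain ⟨Φ, hΦ⟩ := H
  exact stmt14_general hk hα hβ hα' hβ' hcop hcop' fun n ↦
    hilbertFunction_eq_of_linearEquiv Φ.toLinearEquiv (hΦ n)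
end
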